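/- The descent polynomials satisfy, for all n ≥ 0, the following recurrence relations (as identities in ℚ[x], with ' denoting the formal derivative): D⁺_{n+1}(x) = nx·R⁺_n(x) + x(1−2x)·(R⁺_n)'(x) + D_n(x); T⁺_{n+1}(x) = nx·R⁺_n(x) + x(1−2x)·(R⁺_n)'(x) + T_n(x); D⁻_{n+1}(x) = (n+1)x·R⁻_n(x) + x(1−2x)·(R⁻_n)'(x) + x·T⁺_n(x); T⁻_{n+1}(x) = (n+1)x·R⁻_n(x) + x(1−2x)·(R⁻_n)'(x) + x·D⁺_n(x); D_{n+1}(x) = (1+nx)·D_n(x) + (n+1)x·T_n(x) + x(1−2x)·R_n'(x) + x·D⁻_n(x); T_{n+1}(x) = (1+nx)·T_n(x) + (n+1)x·D_n(x) + x(1−2x)·R_n'(x) + x·T⁻_n(x); with initial conditions D⁺_0(x) = D_0(x) = 1 and D⁻_0(x) = T_0(x) = T⁺_0(x) = T⁻_0(x) = 0. -/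

import Mathlib

/-!
Every signed permutation of rank `n + 1` arises in exactly one way from a signed permutation `π`
of rank `n` by inserting the letter `n + 1` or `-(n + 1)` somewhere after `π(0) = 0`
(`ins`, `sum_signedPerm_succ`), and the result is simsun iff `π` is simsun and the new word has
no double descent (`isSimsun_ins`). So the recurrences follow from counting, for a simsun `π`
with `d` descents, the admissible insertions by the number of descents they produce.

* Inserting `n + 1` between two letters is admissible iff the right one is not the top of a
  descent. Inserting it into a descent or at the end keeps `d`, and inserting it into any other
  admissible gap gives `d + 1`. There are `d + 1` gaps of the first kind and `n - 2d`
  (if `π(1) > 0`) or `n + 1 - 2d` (if `π(1) < 0`) of the second (`sum_large`).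
* Inserting `-(n + 1)` is admissible iff the letter on the left is not the bottom of a descent.
  Then `d` gaps keep the number of descents and `n + 1 - 2d` gaps increase it by one
  (`wt_small_first` and `sum_small`, which treat the gap after `π(0)` separately).

Both counts are inductions on the word. The gap after `π(0)` is special because it alone changes
the sign of the first entry; `-(n + 1)` changes the parity of the number of negative entries, and
`n + 1` does not. A family of `d` gaps keeping `d` and `c - 2d` gaps raising it contributes
`d x^d + (c - 2d) x^(d+1) = c x · x^d + x (1 - 2x) (x^d)'`, which is the operator `opE c` below.
Collecting contributions gives two recurrences for the four refined polynomials `S n e g`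
(`S_succ_false`, `S_succ_true`), and the six claimed recurrences are linear combinations of them.
-/

open Finset

/-- A signed permutation of rank `n`, encoded as an (unsigned) permutation of
`Fin n` together with a choice of sign for each position: the entry
`π(i+1)` of the word is `±(σ(i)+1)` where the sign is `-` iff `sgn i = true`. -/
abbrev SignedPerm (n : ℕ) := Equiv.Perm (Fin n) × (Fin n → Bool)

/-- The entry `π(j+1)` of the word of a signed permutation. -/
def entry {n : ℕ} (π : SignedPerm n) (j : Fin n) : ℤ :=
  (if π.2 j then -1 else 1) * (((π.1 j : ℕ) : ℤ) + 1)

/-- The word `π(0)π(1)⋯π(n)` of a signed permutation (with the leading `0`). -/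
def word {n : ℕ} (π : SignedPerm n) : List ℤ :=
  0 :: List.ofFn (entry π)

/-- `π(i)` for `0 ≤ i ≤ n` (and `0` outside this range). -/
def wordFn {n : ℕ} (π : SignedPerm n) (i : ℕ) : ℤ :=
  if h : 1 ≤ i ∧ i ≤ n then entry π ⟨i - 1, by omega⟩ else 0

/-- A word has no double descent: no three consecutive strictly decreasing entries. -/
def noDD : List ℤ → Bool
  | a :: b :: c :: rest => (!(decide (b < a) && decide (c < b))) && noDD (b :: c :: rest)
  | _ => true

/-- A signed permutation is simsun if for every `0 ≤ k ≤ n`, deleting the entries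
`±n, …, ±(n-k+1)` (i.e. keeping the entries of absolute value `≤ m := n - k`) from the
word `π(0)π(1)⋯π(n)` leaves a word with no three consecutive strictly decreasing
entries. -/
def IsSimsun {n : ℕ} (π : SignedPerm n) : Prop :=
  ∀ m ≤ n, noDD ((word π).filter (fun a => a.natAbs ≤ m)) = true

instance {n : ℕ} : DecidablePred (IsSimsun (n := n)) := fun _ => by
  unfold IsSimsun; infer_instance

/-- The type-B descent number `des_B(π) = #{0 ≤ i ≤ n-1 : π(i) > π(i+1)}`. -/
def desB {n : ℕ} (π : SignedPerm n) : ℕ :=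
  ((Finset.range n).filter (fun i => wordFn π (i + 1) < wordFn π i)).card

/-- The set of signed simsun permutations of rank `n`. -/
def RB (n : ℕ) : Finset (SignedPerm n) := univ.filter IsSimsun

/-- Signed simsun permutations with `π(1) > 0` (for `n = 0`, the empty permutation
is included, following the convention `R⁺_0 = 1`). -/
def RBp (n : ℕ) : Finset (SignedPerm n) :=
  (RB n).filter (fun π => 0 < wordFn π 1 ∨ n = 0)

/-- Signed simsun permutations with `π(1) < 0`. -/
def RBm (n : ℕ) : Finset (SignedPerm n) :=
  (RB n).filter (fun π => wordFn π 1 < 0)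

/-- A signed permutation is even-signed if its word has an even number of negative entries. -/
def IsEvenSigned {n : ℕ} (π : SignedPerm n) : Prop :=
  (univ.filter (fun j => π.2 j = true)).card % 2 = 0

instance {n : ℕ} : DecidablePred (IsEvenSigned (n := n)) := fun _ => by
  unfold IsEvenSigned; infer_instance

def RD (n : ℕ) : Finset (SignedPerm n) := (RB n).filter IsEvenSigned
def RT (n : ℕ) : Finset (SignedPerm n) := (RB n).filter (fun π => ¬ IsEvenSigned π)
def RDp (n : ℕ) : Finset (SignedPerm n) := (RD n).filter (fun π => 0 < wordFn π 1 ∨ n = 0)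
def RDm (n : ℕ) : Finset (SignedPerm n) := (RD n).filter (fun π => wordFn π 1 < 0)
def RTp (n : ℕ) : Finset (SignedPerm n) := (RT n).filter (fun π => 0 < wordFn π 1 ∨ n = 0)
def RTm (n : ℕ) : Finset (SignedPerm n) := (RT n).filter (fun π => wordFn π 1 < 0)

/-- `R(n,k)`, as an integer, vanishing for `k < 0`. -/
def Rcnt (n : ℕ) (k : ℤ) : ℤ := ((RB n).filter (fun π => (desB π : ℤ) = k)).card
def Rpcnt (n : ℕ) (k : ℤ) : ℤ := ((RBp n).filter (fun π => (desB π : ℤ) = k)).card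
def Rmcnt (n : ℕ) (k : ℤ) : ℤ := ((RBm n).filter (fun π => (desB π : ℤ) = k)).card
def Dcnt (n : ℕ) (k : ℤ) : ℤ := ((RD n).filter (fun π => (desB π : ℤ) = k)).card
def Tcnt (n : ℕ) (k : ℤ) : ℤ := ((RT n).filter (fun π => (desB π : ℤ) = k)).card
def Dpcnt (n : ℕ) (k : ℤ) : ℤ := ((RDp n).filter (fun π => (desB π : ℤ) = k)).card
def Dmcnt (n : ℕ) (k : ℤ) : ℤ := ((RDm n).filter (fun π => (desB π : ℤ) = k)).card
def Tpcnt (n : ℕ) (k : ℤ) : ℤ := ((RTp n).filter (fun π => (desB π : ℤ) = k)).card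
def Tmcnt (n : ℕ) (k : ℤ) : ℤ := ((RTm n).filter (fun π => (desB π : ℤ) = k)).card

open Polynomial in
/-- The descent polynomial `R_n(x) = Σ_{π ∈ RB_n} x^{des_B(π)}`. -/
noncomputable def Rpoly (n : ℕ) : ℚ[X] := ∑ π ∈ RB n, X ^ desB π
open Polynomial in
noncomputable def Rppoly (n : ℕ) : ℚ[X] := ∑ π ∈ RBp n, X ^ desB π
open Polynomial in
noncomputable def Rmpoly (n : ℕ) : ℚ[X] := ∑ π ∈ RBm n, X ^ desB π
open Polynomial in
noncomputable def Dpoly (n : ℕ) : ℚ[X] := ∑ π ∈ RD n, X ^ desB π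
open Polynomial in
noncomputable def Tpoly (n : ℕ) : ℚ[X] := ∑ π ∈ RT n, X ^ desB π
open Polynomial in
noncomputable def Dppoly (n : ℕ) : ℚ[X] := ∑ π ∈ RDp n, X ^ desB π
open Polynomial in
noncomputable def Dmpoly (n : ℕ) : ℚ[X] := ∑ π ∈ RDm n, X ^ desB π
open Polynomial in
noncomputable def Tppoly (n : ℕ) : ℚ[X] := ∑ π ∈ RTp n, X ^ desB π
open Polynomial in
noncomputable def Tmpoly (n : ℕ) : ℚ[X] := ∑ π ∈ RTm n, X ^ desB π

/-! ### Descents of integer words -/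

/-- Number of descents of a word of integers. -/
def desL : List ℤ → ℕ
  | a :: b :: t => (if b < a then 1 else 0) + desL (b :: t)
  | _ => 0

/-- Whether the word starts with a descent. -/
def negStart : List ℤ → Bool
  | a :: b :: _ => decide (b < a)
  | _ => false

open Polynomial in
/-- The weight of a word: `X ^ des` if it has no double descent, and `0` otherwise. -/
noncomputable def wt (l : List ℤ) : ℚ[X] := if noDD l then X ^ desL l else 0

lemma noDD_cons_cons (a b : ℤ) (l : List ℤ) :
    noDD (a :: b :: l) = (!(decide (b < a) && negStart (b :: l)) && noDD (b :: l)) := by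
  cases l <;> simp [noDD, negStart]

open Polynomial in
lemma wt_cons_cons (a b : ℤ) (l : List ℤ) :
    wt (a :: b :: l) =
      if b < a then (if negStart (b :: l) then 0 else X * wt (b :: l)) else wt (b :: l) := by
  unfold wt
  rw [noDD_cons_cons]
  by_cases h : b < a <;> by_cases h' : negStart (b :: l) <;> simp [h, h', desL, pow_add]

lemma negStart_insertIdx_large (b N : ℤ) (t : List ℤ) (i : ℕ) (hN : b < N)
    (h : negStart (b :: t) = false) : negStart (b :: t.insertIdx i N) = false := by
  cases i with
  | zero => simp [negStart]; omega
  | succ i => cases t <;> simp_all [negStart]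

lemma negStart_insertIdx_succ (b N : ℤ) (t : List ℤ) (i : ℕ) :
    negStart (b :: t.insertIdx (i + 1) N) = negStart (b :: t) := by
  cases t <;> simp [negStart]

open Polynomial in
/-- Inserting a letter larger than all others right after the first letter of a word without
double descents that starts with a descent. -/
lemma wt_large_first (a N : ℤ) (t : List ℤ) (hN : ∀ x ∈ a :: t, x < N)
    (h : noDD (a :: t) = true) (hs : negStart (a :: t) = true) :
    wt (a :: N :: t) = X ^ desL (a :: t) := by
  cases t with
  | nil => simp [negStart] at hs
  | cons b t =>
    have hb : b < a := by simpa [negStart] using hs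
    have h1 : a < N := hN a (by simp)
    have h2 : b < N := hN b (by simp)
    rw [noDD_cons_cons] at h
    have h3 : negStart (b :: t) = false := by simp_all
    have h4 : noDD (b :: t) = true := by simp_all
    rw [wt_cons_cons, wt_cons_cons, if_neg (by omega), if_pos h2, h3]
    simp [wt, h4, desL, hb, pow_add]

open Polynomial in
/-- Inserting a letter smaller than all others right after the first letter of a word without
double descents. -/
lemma wt_small_first (a N : ℤ) (t : List ℤ) (hN : ∀ x ∈ a :: t, N < x)
    (h : noDD (a :: t) = true) :
    wt (a :: N :: t) = X ^ (desL (a :: t) + if negStart (a :: t) then 0 else 1) := by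
  have h1 : N < a := hN a (by simp)
  cases t with
  | nil => simp [wt, noDD, desL, negStart, h1]
  | cons b t =>
    have h2 : N < b := hN b (by simp)
    rw [noDD_cons_cons] at h
    have h4 : noDD (b :: t) = true := by simp_all
    have h5 : negStart (N :: b :: t) = false := by simp [negStart]; omega
    rw [wt_cons_cons, wt_cons_cons, if_pos h1, h5, if_neg (c := b < N) (by omega)]
    by_cases hb : b < a <;> simp [wt, h4, desL, negStart, hb] <;> ring

open Polynomial in
/-- Total weight of all insertions of a letter `N` larger than all others after some letter
of a word without double descents. -/
lemma sum_large (N : ℤ) (t : List ℤ) : ∀ a : ℤ, (∀ x ∈ a :: t, x < N) →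
    noDD (a :: t) = true →
    ∑ i ∈ range (t.length + 1), wt (a :: t.insertIdx i N) =
      ((desL (a :: t) : ℚ[X]) + 1) * X ^ desL (a :: t) +
        ((t.length : ℚ[X]) + (if negStart (a :: t) then 1 else 0) - 2 * (desL (a :: t) : ℚ[X])) *
          X ^ (desL (a :: t) + 1) := by
  induction t with
  | nil =>
    intro a hN _
    have h1 : a < N := hN a (by simp)
    have h2 : ¬ N < a := by omega
    simp [wt, noDD, desL, negStart, h2]
  | cons b t ih =>
    intro a hN h
    have h1 : a < N := hN a (by simp)
    have h2 : b < N := hN b (by simp)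
    rw [noDD_cons_cons] at h
    have h4 : noDD (b :: t) = true := by simp_all
    have ih' := ih b (fun x hx => hN x (List.mem_cons_of_mem _ hx)) h4
    rw [List.length_cons, Finset.sum_range_succ']
    simp only [List.insertIdx_succ_cons, List.insertIdx_zero]
    have hfirst : wt (a :: N :: b :: t) =
        if negStart (b :: t) then 0 else X * X ^ desL (b :: t) := by
      rw [wt_cons_cons, wt_cons_cons, if_neg (by omega), if_pos h2]
      simp [wt, h4]
    rw [hfirst]
    by_cases hb : b < a
    · have h3 : negStart (b :: t) = false := by simp_all
      have hrest : ∀ i ∈ range (t.length + 1),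
          wt (a :: b :: t.insertIdx i N) = X * wt (b :: t.insertIdx i N) := fun i _ => by
        rw [wt_cons_cons, if_pos hb, negStart_insertIdx_large b N t i h2 h3]; simp
      rw [Finset.sum_congr rfl hrest, ← Finset.mul_sum, ih']
      have h5 : negStart (a :: b :: t) = true := by simp [negStart, hb]
      have h6 : desL (a :: b :: t) = desL (b :: t) + 1 := by simp [desL, hb, add_comm]
      rw [h3, h5, h6]; push_cast; simp; ring
    · have hrest : ∀ i ∈ range (t.length + 1),
          wt (a :: b :: t.insertIdx i N) = wt (b :: t.insertIdx i N) := fun i _ => by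
        rw [wt_cons_cons, if_neg hb]
      rw [Finset.sum_congr rfl hrest, ih']
      have h5 : negStart (a :: b :: t) = false := by simp [negStart]; omega
      have h6 : desL (a :: b :: t) = desL (b :: t) := by simp [desL, hb]
      rw [h5, h6]
      by_cases h3 : negStart (b :: t) <;> simp [h3] <;> ring

open Polynomial in
/-- Total weight of all insertions of a letter `N` smaller than all others after some letter
except the first one of a word without double descents. -/
lemma sum_small (N : ℤ) (t : List ℤ) : ∀ a : ℤ, (∀ x ∈ a :: t, N < x) →
    noDD (a :: t) = true →
    ∑ i ∈ range t.length, wt (a :: t.insertIdx (i + 1) N) =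
      ((desL (a :: t) : ℚ[X]) - (if negStart (a :: t) then 1 else 0)) * X ^ desL (a :: t) +
        ((t.length : ℚ[X]) + (if negStart (a :: t) then 1 else 0) - 2 * (desL (a :: t) : ℚ[X])) *
          X ^ (desL (a :: t) + 1) := by
  induction t with
  | nil => intro a hN _; simp [desL, negStart]
  | cons b t ih =>
    intro a hN h
    have h2 : N < b := hN b (by simp)
    rw [noDD_cons_cons] at h
    have h4 : noDD (b :: t) = true := by simp_all
    have hN' : ∀ x ∈ b :: t, N < x := fun x hx => hN x (List.mem_cons_of_mem _ hx)
    have ih' := ih b hN' h4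
    rw [List.length_cons, Finset.sum_range_succ']
    simp only [List.insertIdx_succ_cons, List.insertIdx_zero]
    by_cases hb : b < a
    · have h3 : negStart (b :: t) = false := by simp_all
      have hrest : ∀ i ∈ range t.length,
          wt (a :: b :: t.insertIdx (i + 1) N) = X * wt (b :: t.insertIdx (i + 1) N) :=
        fun i _ => by
          rw [wt_cons_cons, if_pos hb, negStart_insertIdx_succ, h3]; simp
      have h7 : negStart (b :: N :: t) = true := by simp [negStart, h2]
      rw [Finset.sum_congr rfl hrest, ← Finset.mul_sum, ih', wt_cons_cons, if_pos hb, h7]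
      have h5 : negStart (a :: b :: t) = true := by simp [negStart, hb]
      have h6 : desL (a :: b :: t) = desL (b :: t) + 1 := by simp [desL, hb, add_comm]
      rw [h3, h5, h6]; push_cast; simp; ring
    · have hrest : ∀ i ∈ range t.length,
          wt (a :: b :: t.insertIdx (i + 1) N) = wt (b :: t.insertIdx (i + 1) N) := fun i _ => by
        rw [wt_cons_cons, if_neg hb]
      rw [Finset.sum_congr rfl hrest, ih', wt_cons_cons, if_neg hb,
        wt_small_first b N t hN' h4]
      have h5 : negStart (a :: b :: t) = false := by simp [negStart]; omega
      have h6 : desL (a :: b :: t) = desL (b :: t) := by simp [desL, hb]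
      rw [h5, h6]
      by_cases h3 : negStart (b :: t) <;> simp [h3] <;> ring

/-! ### Inserting the largest letter into a signed permutation -/

/-- The signed permutation of rank `n + 1` whose word arises from that of `π` by inserting
the letter `n + 1` (or `-(n + 1)` if `s = true`) so that it is preceded by `p` of the entries
`π(1), …, π(n)`. -/
def ins {n : ℕ} (π : SignedPerm n) (p : Fin (n + 1)) (s : Bool) : SignedPerm (n + 1) :=
  ((finSuccEquiv' p).trans ((Equiv.optionCongr π.1).trans (finSuccEquiv' (Fin.last n)).symm),
    Fin.insertNth p s π.2)

/-- The largest letter `n + 1`, negated if `s = true`. -/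
def topLetter (n : ℕ) (s : Bool) : ℤ := (if s then -1 else 1) * ((n : ℤ) + 1)

lemma ins_fst_self {n : ℕ} (π : SignedPerm n) (p : Fin (n + 1)) (s : Bool) :
    (ins π p s).1 p = Fin.last n := by
  simp [ins]

lemma ins_fst_succAbove {n : ℕ} (π : SignedPerm n) (p : Fin (n + 1)) (s : Bool) (j : Fin n) :
    (ins π p s).1 (p.succAbove j) = (π.1 j).castSucc := by
  simp [ins]

lemma ins_injective {n : ℕ} :
    Function.Injective (fun x : SignedPerm n × Fin (n + 1) × Bool => ins x.1 x.2.1 x.2.2) := by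
  rintro ⟨π, p, s⟩ ⟨π', p', s'⟩ h
  simp only at h
  obtain rfl : p = p' := by
    have h1 := ins_fst_self π p s
    have h2 := ins_fst_self π' p' s'
    rw [h, ← h2] at h1
    exact (ins π' p' s').1.injective h1
  have hs : s = s' := by
    have := congrArg (fun x => x.2 p) h
    simpa [ins] using this
  have hσ : π.1 = π'.1 := by
    ext j
    have := ins_fst_succAbove π p s j
    rw [h, ins_fst_succAbove] at this
    simpa using (congrArg Fin.val this).symm
  have hε : π.2 = π'.2 := by
    ext j
    have := congrArg (fun x => x.2 (p.succAbove j)) h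
    simp only [ins, Fin.insertNth_apply_succAbove] at this
    rw [this]
  rw [Prod.ext hσ hε, hs]

lemma ins_bijective {n : ℕ} :
    Function.Bijective (fun x : SignedPerm n × Fin (n + 1) × Bool => ins x.1 x.2.1 x.2.2) := by
  rw [Fintype.bijective_iff_injective_and_card]
  refine ⟨ins_injective, ?_⟩
  simp [SignedPerm, Fintype.card_perm, Nat.factorial_succ, pow_succ]
  ring

lemma sum_signedPerm_succ {n : ℕ} {M : Type*} [AddCommMonoid M] (f : SignedPerm (n + 1) → M) :
    ∑ π, f π = ∑ π : SignedPerm n, ∑ s, ∑ p, f (ins π p s) := by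
  rw [← Function.Bijective.sum_comp ins_bijective, Fintype.sum_prod_type]
  refine Finset.sum_congr rfl fun π _ => ?_
  rw [Fintype.sum_prod_type, Finset.sum_comm]

lemma ofFn_insertNth {α : Type*} {n : ℕ} (p : Fin (n + 1)) (x : α) (f : Fin n → α) :
    List.ofFn (Fin.insertNth (α := fun _ => α) p x f) = (List.ofFn f).insertIdx p x := by
  induction n with
  | zero =>
    obtain rfl : p = 0 := Fin.fin_one_eq_zero p
    simp [List.ofFn_succ]
  | succ n ih =>
    cases p using Fin.cases with
    | zero => simp [List.ofFn_succ]
    | succ p =>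
      rw [List.ofFn_succ, List.ofFn_succ (f := f), Fin.val_succ, List.insertIdx_succ_cons, ← ih]
      have h0 : Fin.insertNth (α := fun _ => α) p.succ x f 0 = f 0 := by
        conv_lhs => rw [← Fin.succ_succAbove_zero p]
        rw [Fin.insertNth_apply_succAbove]
      rw [h0]
      congr 1
      · congr 1
        ext j
        cases j using Fin.succAboveCases p with
        | x => simp
        | p j => rw [← Fin.succ_succAbove_succ, Fin.insertNth_apply_succAbove]; simp

lemma entry_ins {n : ℕ} (π : SignedPerm n) (p : Fin (n + 1)) (s : Bool) :
    entry (ins π p s) = Fin.insertNth (α := fun _ => ℤ) p (topLetter n s) (entry π) := by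
  ext j
  cases j using Fin.succAboveCases p with
  | x => simp [entry, ins_fst_self, topLetter]; simp [ins]
  | p j => simp [entry, ins_fst_succAbove]; simp [ins]

lemma word_ins {n : ℕ} (π : SignedPerm n) (p : Fin (n + 1)) (s : Bool) :
    word (ins π p s) = 0 :: (List.ofFn (entry π)).insertIdx p (topLetter n s) := by
  rw [word, entry_ins, ofFn_insertNth]

lemma natAbs_entry_le {n : ℕ} (π : SignedPerm n) (j : Fin n) : (entry π j).natAbs ≤ n := by
  have := (π.1 j).isLt
  unfold entry
  split_ifs <;> omega

lemma natAbs_word_le {n : ℕ} (π : SignedPerm n) : ∀ x ∈ word π, x.natAbs ≤ n := by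
  intro x hx
  rcases List.mem_cons.1 hx with rfl | hx
  · simp
  · obtain ⟨j, rfl⟩ := (List.mem_ofFn' _ _).1 hx
    exact natAbs_entry_le π j

lemma filter_insertIdx {α : Type*} (q : α → Bool) (v : α) (hv : q v = false) (t : List α) :
    ∀ i, (t.insertIdx i v).filter q = t.filter q := by
  induction t with
  | nil => intro i; cases i <;> simp [hv]
  | cons a t ih =>
    intro i
    cases i with
    | zero => simp [hv]
    | succ i => simp [List.filter_cons, ih]

lemma filter_word {n : ℕ} (π : SignedPerm n) :
    (word π).filter (fun a => a.natAbs ≤ n) = word π := by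
  rw [List.filter_eq_self]
  intro x hx
  simpa using natAbs_word_le π x hx

lemma IsSimsun.noDD_word {n : ℕ} {π : SignedPerm n} (h : IsSimsun π) : noDD (word π) = true := by
  have := h n le_rfl
  rwa [filter_word] at this

lemma isSimsun_ins {n : ℕ} (π : SignedPerm n) (p : Fin (n + 1)) (s : Bool) :
    IsSimsun (ins π p s) ↔ IsSimsun π ∧ noDD (word (ins π p s)) = true := by
  have key : ∀ m ≤ n, (word (ins π p s)).filter (fun a => a.natAbs ≤ m) =
      (word π).filter (fun a => a.natAbs ≤ m) := by
    intro m hm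
    rw [word_ins, word, List.filter_cons, List.filter_cons, filter_insertIdx]
    rw [decide_eq_false_iff_not]
    unfold topLetter
    split_ifs <;> omega
  constructor
  · intro h
    refine ⟨fun m hm => ?_, h.noDD_word⟩
    rw [← key m hm]
    exact h m (by omega)
  · rintro ⟨h, h'⟩ m hm
    rcases Nat.lt_or_eq_of_le hm with hm | rfl
    · rw [key m (by omega)]
      exact h m (by omega)
    · rwa [filter_word]

/-! ### Statistics of a signed permutation in terms of its word -/

lemma desL_eq_card (l : List ℤ) :
    desL l = ((range (l.length - 1)).filter (fun i => l.getD (i + 1) 0 < l.getD i 0)).card := by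
  induction l with
  | nil => simp [desL]
  | cons a t ih =>
    cases t with
    | nil => simp [desL]
    | cons b t =>
      rw [desL, ih, Finset.card_filter, Finset.card_filter]
      simp only [List.length_cons, Nat.add_sub_cancel]
      rw [Finset.sum_range_succ']
      rw [add_comm]
      simp

lemma wordFn_eq {n : ℕ} (π : SignedPerm n) (i : ℕ) : wordFn π i = (word π).getD i 0 := by
  unfold wordFn word
  cases i with
  | zero => simp
  | succ i =>
    by_cases h : i < n
    · simp [h]
    · simp [h]

lemma desB_eq {n : ℕ} (π : SignedPerm n) : desB π = desL (word π) := by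
  rw [desL_eq_card, desB]
  simp only [wordFn_eq]
  simp [word]

lemma wordFn_one_neg {n : ℕ} (π : SignedPerm n) :
    wordFn π 1 < 0 ↔ negStart (word π) = true := by
  rw [wordFn_eq, word]
  cases n <;> simp [negStart, List.ofFn_succ]

lemma wordFn_one_pos {n : ℕ} (π : SignedPerm n) :
    (0 < wordFn π 1 ∨ n = 0) ↔ negStart (word π) = false := by
  rw [wordFn_eq, word]
  cases n with
  | zero => simp [negStart]
  | succ n =>
    have : entry π 0 ≠ 0 := by unfold entry; split_ifs <;> omega
    simp [negStart, List.ofFn_succ]; omega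

/-- The number of negative entries modulo 2, as a Boolean: `true` for even-signed. -/
def par {n : ℕ} (π : SignedPerm n) : Bool := decide (IsEvenSigned π)

lemma par_ins {n : ℕ} (π : SignedPerm n) (p : Fin (n + 1)) (s : Bool) :
    par (ins π p s) = xor (par π) s := by
  have : (univ.filter (fun j => (ins π p s).2 j = true)).card =
      (if s then 1 else 0) + (univ.filter (fun j => π.2 j = true)).card := by
    rw [Finset.card_filter, Finset.card_filter, Fin.sum_univ_succAbove _ p]
    simp [ins]
  have h : IsEvenSigned (ins π p s) ↔
      ((if s then 1 else 0) + (univ.filter (fun j => π.2 j = true)).card) % 2 = 0 := by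
    rw [IsEvenSigned, this]
  have h' : IsEvenSigned π ↔ (univ.filter (fun j => π.2 j = true)).card % 2 = 0 := Iff.rfl
  cases s
  · simp only [par, h, h', Bool.xor_false]
    simp
  · simp only [par, h, h', if_true, Bool.xor_true, ← decide_not]
    rw [decide_eq_decide]
    omega

lemma negStart_word_ins_zero {n : ℕ} (π : SignedPerm n) (s : Bool) :
    negStart (word (ins π 0 s)) = s := by
  rw [word_ins]
  cases s <;> simp [negStart, topLetter] <;> omega

lemma negStart_word_ins_succ {n : ℕ} (π : SignedPerm n) (p : Fin n) (s : Bool) :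
    negStart (word (ins π p.succ s)) = negStart (word π) := by
  rw [word_ins, Fin.val_succ, negStart_insertIdx_succ, word]

/-! ### The recurrences -/

open Polynomial in
/-- The descent polynomial of the signed simsun permutations `π` of rank `n` of parity `e`
(`true` for even-signed), with `π(1) < 0` if `g = true` and without this if `g = false`. -/
noncomputable def S (n : ℕ) (e g : Bool) : ℚ[X] :=
  ∑ π : SignedPerm n, if IsSimsun π ∧ par π = e ∧ negStart (word π) = g then X ^ desB π else 0

open Polynomial in
/-- The operator `p ↦ c x p + x (1 - 2x) p'`, accounting for generic insertions. -/
noncomputable def opE (c : ℕ) : ℚ[X] →ₗ[ℚ] ℚ[X] where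
  toFun p := (c : ℚ[X]) * X * p + X * (1 - 2 * X) * derivative p
  map_add' p q := by simp only [derivative_add]; ring
  map_smul' r p := by
    simp only [smul_eq_C_mul, RingHom.id_apply, derivative_C_mul]
    ring

open Polynomial in
lemma opE_X_pow (c d : ℕ) :
    opE c (X ^ d) = (d : ℚ[X]) * X ^ d + ((c : ℚ[X]) - 2 * (d : ℚ[X])) * X ^ (d + 1) := by
  cases d with
  | zero => simp [opE]
  | succ d => simp [opE]; ring

open Polynomial in
/-- The sum over rank `n + 1`, grouped by the permutation `π` of rank `n` into which a letter of
sign `s` is inserted, with the gap after `π(0)` split off. -/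
lemma S_succ (n : ℕ) (e g : Bool) :
    S (n + 1) e g = ∑ π : SignedPerm n, if IsSimsun π then
      ∑ s, if xor (par π) s = e then
        (if s = g then wt (word (ins π 0 s)) else 0) +
        (if negStart (word π) = g then ∑ p : Fin n, wt (word (ins π p.succ s)) else 0)
      else 0 else 0 := by
  rw [S, sum_signedPerm_succ]
  refine Finset.sum_congr rfl fun π _ => ?_
  by_cases h : IsSimsun π
  · rw [if_pos h]
    refine Finset.sum_congr rfl fun s _ => ?_
    rw [Fin.sum_univ_succ]
    simp only [isSimsun_ins, h, par_ins, negStart_word_ins_zero, negStart_word_ins_succ, wt,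
      desB_eq, true_and]
    generalize xor (par π) s = q
    by_cases h1 : q = e <;> by_cases h2 : negStart (word π) = g <;>
      by_cases h3 : s = g <;> simp [h1, h2, h3]
  · simp [isSimsun_ins, h]

open Polynomial in
/-- The contributions of one signed simsun permutation, according to the sign and the
place of the inserted letter. -/
lemma insertion_weights {n : ℕ} (π : SignedPerm n) (h : IsSimsun π) :
    (negStart (word π) = false →
      wt (word (ins π 0 false)) + ∑ p : Fin n, wt (word (ins π p.succ false)) =
        opE n (X ^ desB π) + X ^ desB π ∧
      wt (word (ins π 0 true)) = X * X ^ desB π ∧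
      ∑ p : Fin n, wt (word (ins π p.succ true)) = opE n (X ^ desB π)) ∧
    (negStart (word π) = true →
      wt (word (ins π 0 false)) = X ^ desB π ∧
      ∑ p : Fin n, wt (word (ins π p.succ false)) = opE (n + 1) (X ^ desB π) ∧
      wt (word (ins π 0 true)) + ∑ p : Fin n, wt (word (ins π p.succ true)) =
        opE (n + 1) (X ^ desB π)) := by
  have hd := h.noDD_word
  have hb := natAbs_word_le π
  have hL : ∀ x ∈ word π, x < topLetter n false := fun x hx => by
    have := hb x hx; simp [topLetter]; omega
  have hS : ∀ x ∈ word π, topLetter n true < x := fun x hx => by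
    have := hb x hx; simp [topLetter]; omega
  have hrange : ∀ s, ∑ p : Fin n, wt (word (ins π p.succ s)) = ∑ i ∈ range n,
      wt (0 :: (List.ofFn (entry π)).insertIdx (i + 1) (topLetter n s)) := fun s => by
    rw [← Fin.sum_univ_eq_sum_range
      (fun i => wt (0 :: (List.ofFn (entry π)).insertIdx (i + 1) (topLetter n s)))]
    simp only [word_ins, Fin.val_succ]
  have hzero : ∀ s, wt (word (ins π 0 s)) =
      wt (0 :: topLetter n s :: List.ofFn (entry π)) := fun s => by simp [word_ins]
  have e1 := sum_large _ _ _ hL hd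
  have e2 := wt_large_first _ _ _ hL hd
  have e3 := wt_small_first _ _ _ hS hd
  have e4 := sum_small _ _ _ hS hd
  rw [List.length_ofFn, Finset.sum_range_succ', List.insertIdx_zero] at e1
  rw [List.length_ofFn] at e4
  have hw : 0 :: List.ofFn (entry π) = word π := rfl
  simp only [← hzero, ← hrange, hw] at e1 e2 e3 e4
  simp only [opE_X_pow, desB_eq]
  refine ⟨fun hn => ?_, fun hn => ?_⟩
  · simp only [hn] at e1 e3 e4
    refine ⟨?_, ?_, ?_⟩
    · rw [add_comm, e1]; simp; ring
    · rw [e3]; simp; ring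
    · rw [e4]; simp
  · have e2 := e2 hn
    simp only [hn] at e1 e3 e4
    refine ⟨e2, ?_, ?_⟩
    · rw [e2] at e1
      rw [eq_sub_of_add_eq e1]; push_cast; ring
    · rw [e3, e4]; push_cast; simp; ring

open Polynomial in
lemma S_succ_false (n : ℕ) (e : Bool) :
    S (n + 1) e false =
      opE n (S n true false + S n false false) + (S n e false + S n e true) := by
  rw [S_succ, map_add]
  unfold S
  simp only [map_sum, ← Finset.sum_add_distrib]
  refine Finset.sum_congr rfl fun π _ => ?_
  by_cases h : IsSimsun π
  · obtain ⟨h1, h2⟩ := insertion_weights π h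
    cases hg : negStart (word π)
    · obtain ⟨a, b, c⟩ := h1 hg
      cases hp : par π <;> cases e <;> simp [h, a, c]
    · obtain ⟨a, b, c⟩ := h2 hg
      cases hp : par π <;> cases e <;> simp [h, a]
  · simp [h]

open Polynomial in
lemma S_succ_true (n : ℕ) (e : Bool) :
    S (n + 1) e true =
      opE (n + 1) (S n true true + S n false true) + X * S n (!e) false := by
  rw [S_succ, map_add]
  unfold S
  simp only [map_sum, Finset.mul_sum, ← Finset.sum_add_distrib]
  refine Finset.sum_congr rfl fun π _ => ?_
  by_cases h : IsSimsun π
  · obtain ⟨h1, h2⟩ := insertion_weights π h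
    cases hg : negStart (word π)
    · obtain ⟨a, b, c⟩ := h1 hg
      cases hp : par π <;> cases e <;> simp [h, b]
    · obtain ⟨a, b, c⟩ := h2 hg
      cases hp : par π <;> cases e <;> simp [h, b, c]
  · simp [h]

lemma Dppoly_eq (n : ℕ) : Dppoly n = S n true false := by
  simp only [Dppoly, RDp, RD, RB, S, Finset.filter_filter, Finset.sum_filter, wordFn_one_pos,
    par, decide_eq_true_eq, and_assoc]

lemma Dmpoly_eq (n : ℕ) : Dmpoly n = S n true true := by
  simp only [Dmpoly, RDm, RD, RB, S, Finset.filter_filter, Finset.sum_filter, wordFn_one_neg,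
    par, decide_eq_true_eq, and_assoc]

lemma Tppoly_eq (n : ℕ) : Tppoly n = S n false false := by
  simp only [Tppoly, RTp, RT, RB, S, Finset.filter_filter, Finset.sum_filter, wordFn_one_pos,
    par, decide_eq_false_iff_not, and_assoc]

lemma Tmpoly_eq (n : ℕ) : Tmpoly n = S n false true := by
  simp only [Tmpoly, RTm, RT, RB, S, Finset.filter_filter, Finset.sum_filter, wordFn_one_neg,
    par, decide_eq_false_iff_not, and_assoc]

lemma Dpoly_eq (n : ℕ) : Dpoly n = S n true false + S n true true := by
  simp only [Dpoly, RD, RB, S, Finset.filter_filter, Finset.sum_filter,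
    par, decide_eq_true_eq, ← Finset.sum_add_distrib]
  refine Finset.sum_congr rfl fun π _ => ?_
  cases negStart (word π) <;> simp

lemma Tpoly_eq (n : ℕ) : Tpoly n = S n false false + S n false true := by
  simp only [Tpoly, RT, RB, S, Finset.filter_filter, Finset.sum_filter,
    par, decide_eq_false_iff_not, ← Finset.sum_add_distrib]
  refine Finset.sum_congr rfl fun π _ => ?_
  cases negStart (word π) <;> simp

lemma Rppoly_eq (n : ℕ) : Rppoly n = S n true false + S n false false := by
  simp only [Rppoly, RBp, RB, S, Finset.filter_filter, Finset.sum_filter, wordFn_one_pos,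
    ← Finset.sum_add_distrib]
  refine Finset.sum_congr rfl fun π _ => ?_
  cases par π <;> simp

lemma Rmpoly_eq (n : ℕ) : Rmpoly n = S n true true + S n false true := by
  simp only [Rmpoly, RBm, RB, S, Finset.filter_filter, Finset.sum_filter, wordFn_one_neg,
    ← Finset.sum_add_distrib]
  refine Finset.sum_congr rfl fun π _ => ?_
  cases par π <;> simp

lemma Rpoly_eq (n : ℕ) : Rpoly n = Rppoly n + Rmpoly n := by
  simp only [Rpoly, Rppoly, Rmpoly, RBp, RBm, RB, Finset.filter_filter, Finset.sum_filter,
    wordFn_one_pos, wordFn_one_neg, ← Finset.sum_add_distrib]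
  refine Finset.sum_congr rfl fun π _ => ?_
  cases negStart (word π) <;> simp

open Polynomial in
lemma S_zero (e g : Bool) : S 0 e g = if e = true ∧ g = false then 1 else 0 := by
  have h1 : ∀ π : SignedPerm 0, IsSimsun π := fun π m _ => by simp [word, noDD]
  have h2 : ∀ π : SignedPerm 0, par π = true := fun π => by simp [par, IsEvenSigned]
  have h3 : ∀ π : SignedPerm 0, negStart (word π) = false := fun π => by simp [word, negStart]
  have h4 : ∀ π : SignedPerm 0, desB π = 0 := fun π => by simp [desB]
  simp [S, h1, h2, h3, h4, eq_comm]

open Polynomial in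
/-- The recurrence relations for the descent polynomials of even-signed and odd-signed
simsun permutations. -/
theorem stmt13 :
    Dppoly 0 = 1 ∧ Dpoly 0 = 1 ∧ Dmpoly 0 = 0 ∧ Tpoly 0 = 0 ∧ Tppoly 0 = 0 ∧ Tmpoly 0 = 0 ∧
    ∀ n : ℕ,
      Dppoly (n + 1) =
          (n : ℚ[X]) * X * Rppoly n + X * (1 - 2 * X) * derivative (Rppoly n) + Dpoly n ∧
      Tppoly (n + 1) =
          (n : ℚ[X]) * X * Rppoly n + X * (1 - 2 * X) * derivative (Rppoly n) + Tpoly n ∧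
      Dmpoly (n + 1) =
          ((n : ℚ[X]) + 1) * X * Rmpoly n + X * (1 - 2 * X) * derivative (Rmpoly n) +
            X * Tppoly n ∧
      Tmpoly (n + 1) =
          ((n : ℚ[X]) + 1) * X * Rmpoly n + X * (1 - 2 * X) * derivative (Rmpoly n) +
            X * Dppoly n ∧
      Dpoly (n + 1) =
          (1 + (n : ℚ[X]) * X) * Dpoly n + ((n : ℚ[X]) + 1) * X * Tpoly n +
            X * (1 - 2 * X) * derivative (Rpoly n) + X * Dmpoly n ∧
      Tpoly (n + 1) =
          (1 + (n : ℚ[X]) * X) * Tpoly n + ((n : ℚ[X]) + 1) * X * Dpoly n +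
            X * (1 - 2 * X) * derivative (Rpoly n) + X * Tmpoly n := by
  simp only [Dppoly_eq, Dmpoly_eq, Tppoly_eq, Tmpoly_eq, Dpoly_eq, Tpoly_eq, Rpoly_eq, Rppoly_eq,
    Rmpoly_eq, S_succ_false, S_succ_true, S_zero]
  refine ⟨by simp, by simp, by simp, by simp, by simp, by simp, fun n => ?_⟩
  simp only [opE, LinearMap.coe_mk, AddHom.coe_mk, derivative_add, Bool.not_true, Bool.not_false]
  push_cast
  refine ⟨trivial, trivial, ?_, ?_, ?_, ?_⟩ <;> ring
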